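/- arXiv:1103.4254 — 2 statements merged into one kernel-verified Lean document; each statement's English description precedes it below -/
import Mathlib

section
/- Let 𝒜 and ℬ be abelian categories, F : 𝒜 ⥤ ℬ a right exact functor (preserving finite colimits), G : 𝒜 ⥤ ℬ a left exact functor (preserving finite limits), and T : F ⟶ G a natural transformation. Then the category C(F,G,T) — whose objects are quadruples (A, B, u, v) with A an object of 𝒜, B an object of ℬ, u : F(A) → B and v : B → G(A) morphisms of ℬ satisfying v ∘ u = T_A, and whose morphisms (A,B,u,v) → (A',B',u',v') are pairs (a : A → A', b : B → B') with b ∘ u = u' ∘ F(a) and G(a) ∘ v = v' ∘ b — is an abelian category. -/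
open CategoryTheory CategoryTheory.Limits

universe v₁ v₂ u₁ u₂

variable {𝒜 : Type u₁} {ℬ : Type u₂} [Category.{v₁} 𝒜] [Category.{v₂} ℬ]
variable [Abelian 𝒜] [Abelian ℬ]

/-- Objects of the MacPherson–Vilonen category `C(F,G,T)`: quadruples `(A, B, u, v)`
with `v ∘ u = T_A`. -/
structure CFGT (F G : 𝒜 ⥤ ℬ) (T : F ⟶ G) where
  A : 𝒜
  B : ℬ
  u : F.obj A ⟶ B
  v : B ⟶ G.obj A
  comm : u ≫ v = T.app A

/-- Morphisms of `C(F,G,T)`: pairs `(a, b)` making the two evident squares commute. -/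
@[ext]
structure CFGTHom {F G : 𝒜 ⥤ ℬ} {T : F ⟶ G} (X Y : CFGT F G T) where
  a : X.A ⟶ Y.A
  b : X.B ⟶ Y.B
  comm_u : X.u ≫ b = F.map a ≫ Y.u
  comm_v : X.v ≫ G.map a = b ≫ Y.v

instance (F G : 𝒜 ⥤ ℬ) (T : F ⟶ G) : Category (CFGT F G T) where
  Hom X Y := CFGTHom X Y
  id X := ⟨𝟙 X.A, 𝟙 X.B, by simp, by simp⟩
  comp f g := ⟨f.a ≫ g.a, f.b ≫ g.b,
    by rw [← Category.assoc, f.comm_u, Category.assoc, g.comm_u, Functor.map_comp,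
      Category.assoc],
    by rw [Functor.map_comp, ← Category.assoc, f.comm_v, Category.assoc, g.comm_v,
      ← Category.assoc]⟩

/-!
A limit in `C(F,G,T)` is computed componentwise as soon as `G` preserves it: `v` is then a map
into the limit of the `G(Aⱼ)`, and `u` is a map into the limit of the `Bⱼ`. The category
`C(F,G,T)` is opposite to `C(Gᵒᵖ,Fᵒᵖ,Tᵒᵖ)`, so colimits are computed componentwise as soon as `F`
preserves them. Hence the two forgetful functors to `𝒜` and `ℬ` preserve kernels and cokernels;
since they jointly reflect isomorphisms, the comparison `coim f ⟶ im f` is an isomorphism because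
its two components are.
-/

section General

variable {C : Type u₁} {D : Type u₂} [Category.{v₁} C] [Category.{v₂} D]

theorem isIso_map_coimageImageComparison [HasZeroMorphisms C] [HasKernels C] [HasCokernels C]
    [Abelian D] (P : C ⥤ D) [P.PreservesZeroMorphisms]
    [PreservesLimitsOfShape WalkingParallelPair P]
    [PreservesColimitsOfShape WalkingParallelPair P] {X Y : C} (f : X ⟶ Y) :
    IsIso (P.map (Abelian.coimageImageComparison f)) :=
  ((MorphismProperty.isomorphisms D).arrow_mk_iso_iff
    (Abelian.PreservesCoimageImageComparison.iso P f)).2 (.infer_property _)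

theorem hasLimitsOfShape_opposite_op (J : Type*) [Category* J] [HasColimitsOfShape J C] :
    HasLimitsOfShape Jᵒᵖ Cᵒᵖ :=
  hasLimitsOfShape_opposite_opposite_iff.2 ‹_›

theorem preservesLimitsOfShape_opposite_op (J : Type*) [Category* J] (P : C ⥤ D)
    [PreservesColimitsOfShape J P] : PreservesLimitsOfShape Jᵒᵖ P.op :=
  have := preservesColimitsOfShape_of_equiv (opOpEquivalence J).symm P
  preservesLimitsOfShape_op Jᵒᵖ P

end General

namespace CFGT

section Forget

variable {C : Type u₁} {D : Type u₂} [Category.{v₁} C] [Category.{v₂} D]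
  {F G : C ⥤ D} {T : F ⟶ G}

@[ext]
theorem hom_ext {X Y : CFGT F G T} {f g : X ⟶ Y} (ha : f.a = g.a) (hb : f.b = g.b) : f = g :=
  CFGTHom.ext ha hb

@[simp]
theorem id_a (X : CFGT F G T) : CFGTHom.a (𝟙 X) = 𝟙 X.A := rfl

@[simp]
theorem id_b (X : CFGT F G T) : CFGTHom.b (𝟙 X) = 𝟙 X.B := rfl

@[simp]
theorem comp_a {X Y Z : CFGT F G T} (f : X ⟶ Y) (g : Y ⟶ Z) : (f ≫ g).a = f.a ≫ g.a := rfl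

@[simp]
theorem comp_b {X Y Z : CFGT F G T} (f : X ⟶ Y) (g : Y ⟶ Z) : (f ≫ g).b = f.b ≫ g.b := rfl

theorem map_comp_u_comp_v (X : CFGT F G T) {A : C} (a : A ⟶ X.A) :
    (F.map a ≫ X.u) ≫ X.v = T.app A ≫ G.map a := by
  rw [Category.assoc, X.comm, T.naturality]

theorem isIso_of_isIso_a_b {X Y : CFGT F G T} (f : X ⟶ Y) [IsIso f.a] [IsIso f.b] : IsIso f where
  out := by
    refine ⟨⟨inv f.a, inv f.b, ?_, ?_⟩, hom_ext ?_ ?_, hom_ext ?_ ?_⟩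
    · rw [Functor.map_inv, IsIso.eq_inv_comp, ← reassoc_of% f.comm_u, IsIso.hom_inv_id,
        Category.comp_id]
    · rw [Functor.map_inv, IsIso.comp_inv_eq, Category.assoc, f.comm_v, IsIso.inv_hom_id_assoc]
    all_goals simp

variable (F G T)

/-- The forgetful functor `(A, B, u, v) ↦ A`. -/
def fst : CFGT F G T ⥤ C where
  obj X := X.A
  map f := f.a

/-- The forgetful functor `(A, B, u, v) ↦ B`. -/
def snd : CFGT F G T ⥤ D where
  obj X := X.B
  map f := f.b

/-- The structure morphisms `u`, as a natural transformation between functors on `C(F,G,T)`. -/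
def uNatTrans : fst F G T ⋙ F ⟶ snd F G T where
  app X := X.u
  naturality _ _ f := f.comm_u.symm

/-- The structure morphisms `v`, as a natural transformation between functors on `C(F,G,T)`. -/
def vNatTrans : snd F G T ⟶ fst F G T ⋙ G where
  app X := X.v
  naturality _ _ f := f.comm_v.symm

end Forget

section Limits

variable {C : Type u₁} {D : Type u₂} [Category.{v₁} C] [Category.{v₂} D]
  {F G : C ⥤ D} {T : F ⟶ G} {J : Type*} [Category* J]

section Cone

variable {K : J ⥤ CFGT F G T} [PreservesLimit (K ⋙ fst F G T) G]

/-- A pair `(a, b)` into the point of a componentwise limit cone is a morphism of `C(F,G,T)` as soon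
as its composites with all projections of the cone are. -/
def homOfIsLimit {c : Cone K}
    (h₁ : IsLimit ((fst F G T).mapCone c)) (h₂ : IsLimit ((snd F G T).mapCone c))
    {X : CFGT F G T} {a : X.A ⟶ c.pt.A} {b : X.B ⟶ c.pt.B} (p : ∀ j, X ⟶ K.obj j)
    (ha : ∀ j, a ≫ (c.π.app j).a = (p j).a) (hb : ∀ j, b ≫ (c.π.app j).b = (p j).b) :
    X ⟶ c.pt where
  a := a
  b := b
  comm_u := h₂.hom_ext fun j =>
    have hu : c.pt.u ≫ (c.π.app j).b = F.map (c.π.app j).a ≫ (K.obj j).u := (c.π.app j).comm_u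
    calc (X.u ≫ b) ≫ (c.π.app j).b
      _ = F.map (p j).a ≫ (K.obj j).u := by rw [Category.assoc, hb, (p j).comm_u]
      _ = (F.map a ≫ c.pt.u) ≫ (c.π.app j).b := by
        rw [← ha, F.map_comp, Category.assoc, Category.assoc, hu]
  comm_v := (isLimitOfPreserves G h₁).hom_ext fun j =>
    have hv : c.pt.v ≫ G.map (c.π.app j).a = (c.π.app j).b ≫ (K.obj j).v := (c.π.app j).comm_v
    calc (X.v ≫ G.map a) ≫ G.map (c.π.app j).a
      _ = (p j).b ≫ (K.obj j).v := by rw [Category.assoc, ← G.map_comp, ha, (p j).comm_v]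
      _ = (b ≫ c.pt.v) ≫ G.map (c.π.app j).a := by rw [← hb, Category.assoc, Category.assoc, hv]

def fstSndJointlyReflectLimits {c : Cone K}
    (h₁ : IsLimit ((fst F G T).mapCone c)) (h₂ : IsLimit ((snd F G T).mapCone c)) :
    IsLimit c where
  lift s := homOfIsLimit h₁ h₂ s.π.app
    (h₁.fac ((fst F G T).mapCone s)) (h₂.fac ((snd F G T).mapCone s))
  fac s j := hom_ext (h₁.fac ((fst F G T).mapCone s) j) (h₂.fac ((snd F G T).mapCone s) j)
  uniq s _ hm := hom_ext
    (h₁.uniq ((fst F G T).mapCone s) _ fun j => congrArg CFGTHom.a (hm j))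
    (h₂.uniq ((snd F G T).mapCone s) _ fun j => congrArg CFGTHom.b (hm j))

/-- The cone over a diagram in `C(F,G,T)` built from limit cones over its two components. -/
noncomputable def coneOfPreserves {c₁ : Cone (K ⋙ fst F G T)} (h₁ : IsLimit c₁)
    {c₂ : Cone (K ⋙ snd F G T)} (h₂ : IsLimit c₂) : Cone K where
  pt :=
    { A := c₁.pt
      B := c₂.pt
      u := h₂.lift ((Cone.postcompose (K.whiskerLeft (uNatTrans F G T))).obj (F.mapCone c₁))
      v := (isLimitOfPreserves G h₁).lift
        ((Cone.postcompose (K.whiskerLeft (vNatTrans F G T))).obj c₂)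
      comm := (isLimitOfPreserves G h₁).hom_ext fun j => by
        rw [Category.assoc, IsLimit.fac]
        exact (h₂.fac_assoc _ j _).trans (map_comp_u_comp_v (K.obj j) (c₁.π.app j)) }
  π :=
    { app j :=
        { a := c₁.π.app j
          b := c₂.π.app j
          comm_u := h₂.fac _ j
          comm_v := (isLimitOfPreserves G h₁).fac _ j }
      naturality _ _ f := hom_ext (c₁.π.naturality f) (c₂.π.naturality f) }

noncomputable def isLimitConeOfPreserves {c₁ : Cone (K ⋙ fst F G T)} (h₁ : IsLimit c₁)
    {c₂ : Cone (K ⋙ snd F G T)} (h₂ : IsLimit c₂) : IsLimit (coneOfPreserves h₁ h₂) :=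
  fstSndJointlyReflectLimits h₁ h₂

end Cone

variable [HasLimitsOfShape J C] [HasLimitsOfShape J D] [PreservesLimitsOfShape J G]

instance hasLimitsOfShape : HasLimitsOfShape J (CFGT F G T) where
  has_limit _ := ⟨⟨_, isLimitConeOfPreserves (limit.isLimit _) (limit.isLimit _)⟩⟩

instance preservesLimitsOfShape_fst : PreservesLimitsOfShape J (fst F G T) where
  preservesLimit {K} := preservesLimit_of_preserves_limit_cone
    (isLimitConeOfPreserves (limit.isLimit _) (limit.isLimit _)) (limit.isLimit (K ⋙ fst F G T))

instance preservesLimitsOfShape_snd : PreservesLimitsOfShape J (snd F G T) where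
  preservesLimit {K} := preservesLimit_of_preserves_limit_cone
    (isLimitConeOfPreserves (limit.isLimit _) (limit.isLimit _)) (limit.isLimit (K ⋙ snd F G T))

end Limits

section Duality

variable {C : Type u₁} {D : Type u₂} [Category.{v₁} C] [Category.{v₂} D] (F G : C ⥤ D) (T : F ⟶ G)

/-- The self-duality of the construction: passing to opposites exchanges `F` with `G` and
`u` with `v`. -/
def opFunctor : (CFGT F G T)ᵒᵖ ⥤ CFGT G.op F.op (NatTrans.op T) where
  obj X :=
    { A := .op X.unop.A
      B := .op X.unop.B
      u := X.unop.v.op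
      v := X.unop.u.op
      comm := congrArg Quiver.Hom.op X.unop.comm }
  map f :=
    { a := f.unop.a.op
      b := f.unop.b.op
      comm_u := congrArg Quiver.Hom.op f.unop.comm_v.symm
      comm_v := congrArg Quiver.Hom.op f.unop.comm_u.symm }

instance isEquivalence_opFunctor : (opFunctor F G T).IsEquivalence where
  faithful.map_injective h := Quiver.Hom.unop_inj <|
    hom_ext (congrArg (·.a.unop) h) (congrArg (·.b.unop) h)
  full.map_surjective g :=
    ⟨.op { a := g.a.unop
           b := g.b.unop
           comm_u := congrArg Quiver.Hom.unop g.comm_v.symm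
           comm_v := congrArg Quiver.Hom.unop g.comm_u.symm }, rfl⟩
  essSurj.mem_essImage Y :=
    ⟨.op { A := Y.A.unop
           B := Y.B.unop
           u := Y.v.unop
           v := Y.u.unop
           comm := congrArg Quiver.Hom.unop Y.comm }, ⟨Iso.refl _⟩⟩

attribute [local instance] hasLimitsOfShape_opposite_op preservesLimitsOfShape_opposite_op

variable {F G T} {J : Type*} [Category* J]
  [HasColimitsOfShape J C] [HasColimitsOfShape J D] [PreservesColimitsOfShape J F]

instance hasColimitsOfShape : HasColimitsOfShape J (CFGT F G T) := by
  have : HasLimitsOfShape Jᵒᵖ (CFGT F G T)ᵒᵖ :=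
    Adjunction.hasLimitsOfShape_of_equivalence (opFunctor F G T)
  exact hasColimitsOfShape_of_hasLimitsOfShape_op

instance preservesColimitsOfShape_fst : PreservesColimitsOfShape J (fst F G T) := by
  have : PreservesLimitsOfShape Jᵒᵖ (fst F G T).op :=
    inferInstanceAs (PreservesLimitsOfShape _ (opFunctor F G T ⋙ fst G.op F.op _))
  exact preservesColimitsOfShape_of_op _ _

instance preservesColimitsOfShape_snd : PreservesColimitsOfShape J (snd F G T) := by
  have : PreservesLimitsOfShape Jᵒᵖ (snd F G T).op :=
    inferInstanceAs (PreservesLimitsOfShape _ (opFunctor F G T ⋙ snd G.op F.op _))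
  exact preservesColimitsOfShape_of_op _ _

end Duality

section Preadditive

variable {C : Type u₁} {D : Type u₂} [Category.{v₁} C] [Category.{v₂} D]
  [Preadditive C] [Preadditive D] {F G : C ⥤ D} [F.Additive] [G.Additive] {T : F ⟶ G}

instance (X Y : CFGT F G T) : Add (X ⟶ Y) where
  add f g :=
    { a := f.a + g.a
      b := f.b + g.b
      comm_u := by simp [F.map_add, f.comm_u, g.comm_u]
      comm_v := by simp [G.map_add, f.comm_v, g.comm_v] }

instance (X Y : CFGT F G T) : Zero (X ⟶ Y) where
  zero := { a := 0, b := 0, comm_u := by simp, comm_v := by simp }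

instance (X Y : CFGT F G T) : Neg (X ⟶ Y) where
  neg f :=
    { a := -f.a
      b := -f.b
      comm_u := by simp [f.comm_u]
      comm_v := by simp [f.comm_v] }

instance (X Y : CFGT F G T) : AddCommGroup (X ⟶ Y) where
  nsmul := nsmulRec
  zsmul := zsmulRec
  add_assoc _ _ _ := hom_ext (add_assoc _ _ _) (add_assoc _ _ _)
  zero_add _ := hom_ext (zero_add _) (zero_add _)
  add_zero _ := hom_ext (add_zero _) (add_zero _)
  neg_add_cancel _ := hom_ext (neg_add_cancel _) (neg_add_cancel _)
  add_comm _ _ := hom_ext (add_comm _ _) (add_comm _ _)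

instance : Preadditive (CFGT F G T) where
  add_comp _ _ _ _ _ _ := hom_ext (Preadditive.add_comp ..) (Preadditive.add_comp ..)
  comp_add _ _ _ _ _ _ := hom_ext (Preadditive.comp_add ..) (Preadditive.comp_add ..)

instance : (fst F G T).Additive where

instance : (snd F G T).Additive where

end Preadditive

section Abelian

variable {C : Type u₁} {D : Type u₂} [Category.{v₁} C] [Category.{v₂} D]
  [Abelian C] [Abelian D] {F G : C ⥤ D} [F.Additive] [G.Additive] {T : F ⟶ G}

theorem isIso_coimageImageComparison [PreservesColimitsOfShape WalkingParallelPair F]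
    [PreservesLimitsOfShape WalkingParallelPair G] {X Y : CFGT F G T} (f : X ⟶ Y) :
    IsIso (Abelian.coimageImageComparison f) := by
  have : IsIso (Abelian.coimageImageComparison f).a :=
    isIso_map_coimageImageComparison (fst F G T) f
  have : IsIso (Abelian.coimageImageComparison f).b :=
    isIso_map_coimageImageComparison (snd F G T) f
  exact isIso_of_isIso_a_b _

end Abelian

end CFGT

/-- If `F` is right exact and `G` is left exact, the MacPherson–Vilonen category
`C(F,G,T)` is abelian. -/
theorem CFGT_abelian (F G : 𝒜 ⥤ ℬ) (T : F ⟶ G)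
    [PreservesFiniteColimits F] [PreservesFiniteLimits G] :
    Nonempty (Abelian (CFGT F G T)) := by
  have : F.Additive :=
    have := preservesBinaryBiproducts_of_preservesBinaryCoproducts F
    F.additive_of_preservesBinaryBiproducts
  have : G.Additive := G.additive_of_preserves_binary_products
  have : HasFiniteProducts (CFGT F G T) := ⟨fun _ => inferInstance⟩
  have {X Y : CFGT F G T} (f : X ⟶ Y) : IsIso (Abelian.coimageImageComparison f) :=
    CFGT.isIso_coimageImageComparison f
  exact ⟨.ofCoimageImageComparisonIsIso⟩
end

section
/- Let K be a pretriangulated category. Let A →^u B →^v C →^w A[1] and A' →^{u'} B' →^{v'} C' →^{w'} A'[1] be two distinguished triangles, and let β : B → B' and γ : C → C' be morphisms with γ ∘ v = v' ∘ β. If Hom_K(B, C'[-1]) = 0 and Hom_K(C, B') = 0, then there is exactly one morphism α : A → A' such that (α, β, γ) is a morphism of triangles (i.e. β ∘ u = u' ∘ α and α[1] ∘ w = w' ∘ γ). -/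
open CategoryTheory CategoryTheory.Limits CategoryTheory.Pretriangulated

universe v u

variable {K : Type u} [Category.{v} K] [HasZeroObject K] [HasShift K ℤ]
  [Preadditive K] [∀ n : ℤ, (CategoryTheory.shiftFunctor K n).Additive] [Pretriangulated K]

/-!
Existence is an axiom of pretriangulated categories up to rotation. For uniqueness, the difference
`δ : A ⟶ A'` of two solutions satisfies `δ[1] ∘ w = 0`, so `δ = κ ∘ u` for some `κ : B ⟶ A'`. Since
`u' ∘ κ ∘ u = u' ∘ δ = 0`, the morphism `u' ∘ κ` factors through a morphism `C ⟶ B'`, so it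
vanishes; then `κ` factors through a morphism `B ⟶ C'[-1]`, so it vanishes too.
-/

section DistinguishedTriangle

variable {T : Triangle K} {X : K}

lemma exists_eq_mor₁_comp_of_mor₃_comp_shift_eq_zero (hT : T ∈ distTriang K) (f : T.obj₁ ⟶ X)
    (hf : T.mor₃ ≫ f⟦(1 : ℤ)⟧' = 0) : ∃ g : T.obj₂ ⟶ X, f = T.mor₁ ≫ g := by
  obtain ⟨g, hg⟩ : ∃ g : T.obj₂⟦(1 : ℤ)⟧ ⟶ X⟦(1 : ℤ)⟧,
      f⟦(1 : ℤ)⟧' = (-T.mor₁⟦(1 : ℤ)⟧') ≫ g :=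
    Triangle.yoneda_exact₃ T.rotate (rot_of_distTriang T hT) _ hf
  obtain ⟨k, rfl⟩ := (shiftFunctor K (1 : ℤ)).map_surjective g
  refine ⟨-k, (shiftFunctor K (1 : ℤ)).map_injective ?_⟩
  rw [hg, Functor.map_comp, Functor.map_neg, Preadditive.neg_comp, Preadditive.comp_neg]

lemma eq_zero_of_mor₁_comp_eq_zero (hT : T ∈ distTriang K) (hX : ∀ g : T.obj₃ ⟶ X, g = 0)
    {f : T.obj₂ ⟶ X} (hf : T.mor₁ ≫ f = 0) : f = 0 := by
  obtain ⟨g, rfl⟩ := Triangle.yoneda_exact₂ T hT f hf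
  rw [hX g, comp_zero]

lemma eq_zero_of_comp_mor₁_eq_zero (hT : T ∈ distTriang K)
    (hX : ∀ g : X ⟶ T.obj₃⟦(-1 : ℤ)⟧, g = 0) {f : X ⟶ T.obj₁} (hf : f ≫ T.mor₁ = 0) :
    f = 0 := by
  obtain ⟨g, rfl⟩ := Triangle.coyoneda_exact₂ T.invRotate (inv_rot_of_distTriang T hT) f hf
  rw [show g = 0 from hX g]
  exact zero_comp

end DistinguishedTriangle

lemma eq_zero_of_comp_mor₁_eq_zero_of_mor₃_comp_shift_eq_zero {T₁ T₂ : Triangle K}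
    (hT₁ : T₁ ∈ distTriang K) (hT₂ : T₂ ∈ distTriang K)
    (h₁ : ∀ f : T₁.obj₂ ⟶ T₂.obj₃⟦(-1 : ℤ)⟧, f = 0) (h₂ : ∀ f : T₁.obj₃ ⟶ T₂.obj₂, f = 0)
    {δ : T₁.obj₁ ⟶ T₂.obj₁} (hδ₁ : δ ≫ T₂.mor₁ = 0) (hδ₃ : T₁.mor₃ ≫ δ⟦(1 : ℤ)⟧' = 0) :
    δ = 0 := by
  obtain ⟨κ, rfl⟩ := exists_eq_mor₁_comp_of_mor₃_comp_shift_eq_zero hT₁ δ hδ₃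
  have hκ_comp : κ ≫ T₂.mor₁ = 0 :=
    eq_zero_of_mor₁_comp_eq_zero hT₁ h₂ (by rwa [← Category.assoc])
  have hκ : κ = 0 := eq_zero_of_comp_mor₁_eq_zero hT₂ h₁ hκ_comp
  rw [hκ, comp_zero]

/-- Given two distinguished triangles and morphisms `β : B ⟶ B'`, `γ : C ⟶ C'` commuting
with the second maps, if `Hom(B, C'[-1]) = 0` and `Hom(C, B') = 0`, then there is exactly
one `α : A ⟶ A'` making `(α, β, γ)` a morphism of triangles. -/
theorem existsUnique_triangle_morphism_fst
    (T₁ T₂ : Triangle K) (hT₁ : T₁ ∈ distTriang K) (hT₂ : T₂ ∈ distTriang K)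
    (β : T₁.obj₂ ⟶ T₂.obj₂) (γ : T₁.obj₃ ⟶ T₂.obj₃)
    (hcomm : T₁.mor₂ ≫ γ = β ≫ T₂.mor₂)
    (h₁ : ∀ f : T₁.obj₂ ⟶ T₂.obj₃⟦(-1 : ℤ)⟧, f = 0)
    (h₂ : ∀ f : T₁.obj₃ ⟶ T₂.obj₂, f = 0) :
    ∃! α : T₁.obj₁ ⟶ T₂.obj₁,
      T₁.mor₁ ≫ β = α ≫ T₂.mor₁ ∧ T₁.mor₃ ≫ α⟦(1 : ℤ)⟧' = γ ≫ T₂.mor₃ := by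
  obtain ⟨α, hα₁, hα₃⟩ := complete_distinguished_triangle_morphism₁ T₁ T₂ hT₁ hT₂ β γ hcomm
  refine ⟨α, ⟨hα₁, hα₃⟩, fun α' ⟨hα'₁, hα'₃⟩ ↦ sub_eq_zero.mp ?_⟩
  apply eq_zero_of_comp_mor₁_eq_zero_of_mor₃_comp_shift_eq_zero hT₁ hT₂ h₁ h₂
  · rw [Preadditive.sub_comp, ← hα'₁, ← hα₁, sub_self]
  · rw [Functor.map_sub, Preadditive.comp_sub, hα'₃, hα₃, sub_self]
end
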